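/- Let a ≥ 3 be an integer, α = (a + √(a²−4))/2, β = (a − √(a²−4))/2, and G_k = (α^k − β^k)/(α − β). Then for every n ≥ 2, (∑_{k=n}^∞ 1/G_k³)^{−1} < G_n³ − G_{n−1}³ − 3α^{n+2}/((α−β)·α·(α⁵−1)) + λ₁, where λ₁ = 3(α−1)/((α−β)³·αⁿ) + 4/α^{n+3}. -/

import Mathlib

/-- The first two terms of the binomial expansion bound `(1 - y)⁻³` from below. -/
lemma one_add_three_mul_le_inv_cube {y : ℝ} (hy0 : 0 ≤ y) (hy1 : y < 1) :
    1 + 3 * y ≤ 1 / (1 - y) ^ 3 := by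
  rw [le_div_iff₀ (pow_pos (by linarith) 3)]
  nlinarith [mul_nonneg (sq_nonneg y) (show 0 ≤ 6 - 8 * y + 3 * y ^ 2 by nlinarith)]

lemma inv_cube_le_eight {y : ℝ} (hy1 : y ≤ 1 / 2) : 1 / (1 - y) ^ 3 ≤ 8 := by
  have h : (1 / 2 : ℝ) ^ 3 ≤ (1 - y) ^ 3 := pow_le_pow_left₀ (by norm_num) (by linarith) 3
  rw [div_le_iff₀ (lt_of_lt_of_le (by norm_num) h)]
  linarith

lemma one_div_binet_cube {α β : ℝ} (h : α * β = 1) (k : ℕ) :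
    1 / ((α ^ k - β ^ k) / (α - β)) ^ 3 =
      (α - β) ^ 3 * (β ^ k) ^ 3 * (1 / (1 - (β ^ k) ^ 2) ^ 3) := by
  have hk : α ^ k * β ^ k = 1 := by rw [← mul_pow, h, one_pow]
  have hβ : β ^ k ≠ 0 := right_ne_zero_of_mul_eq_one hk
  have e : 1 - (β ^ k) ^ 2 = (α ^ k - β ^ k) * β ^ k := by linear_combination -hk
  rw [e, mul_pow, div_pow, one_div_div]
  field_simp

/-- Lower bound for the tail of the reciprocal cubes, from two geometric series. -/
lemma le_tsum_one_div_binet_cube {α β : ℝ} (h : α * β = 1) (hβ0 : 0 < β) (hβ1 : β ≤ 2 / 5)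
    (hD : 0 < α - β) {n : ℕ} (hn : 2 ≤ n) :
    (α - β) ^ 3 * ((β ^ n) ^ 3 / (1 - β ^ 3) + 3 * (β ^ n) ^ 5 / (1 - β ^ 5)) ≤
      ∑' k : ℕ, 1 / ((α ^ (n + k) - β ^ (n + k)) / (α - β)) ^ 3 := by
  have h3 : β ^ 3 < 1 := pow_lt_one₀ hβ0.le (by linarith) (by norm_num)
  have h5 : β ^ 5 < 1 := pow_lt_one₀ hβ0.le (by linarith) (by norm_num)
  have s3 := hasSum_geometric_of_lt_one (pow_pos hβ0 3).le h3
  have s5 := hasSum_geometric_of_lt_one (pow_pos hβ0 5).le h5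
  have hy (k : ℕ) : (β ^ (n + k)) ^ 2 ≤ 1 / 2 := by
    have h1 : β ^ (n + k) ≤ β ^ 1 :=
      pow_le_pow_of_le_one hβ0.le (by linarith) (by omega)
    nlinarith [pow_pos hβ0 (n + k)]
  have hpos (k : ℕ) : 0 < (α - β) ^ 3 * (β ^ (n + k)) ^ 3 := by positivity
  have hsum : Summable fun k : ℕ => 1 / ((α ^ (n + k) - β ^ (n + k)) / (α - β)) ^ 3 := by
    refine Summable.of_nonneg_of_le (fun k => ?_) (fun k => ?_)
      (s3.summable.mul_left ((α - β) ^ 3 * (β ^ n) ^ 3 * 8))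
    · rw [one_div_binet_cube h]
      exact mul_nonneg (hpos k).le
        (one_div_nonneg.2 (pow_nonneg (by linarith [hy k]) 3))
    · rw [one_div_binet_cube h]
      calc _ ≤ (α - β) ^ 3 * (β ^ (n + k)) ^ 3 * 8 :=
            mul_le_mul_of_nonneg_left (inv_cube_le_eight (hy k)) (hpos k).le
        _ = _ := by ring
  have hlow := ((s3.mul_left ((β ^ n) ^ 3)).add (s5.mul_left (3 * (β ^ n) ^ 5))).mul_left
    ((α - β) ^ 3)
  rw [div_eq_mul_inv, div_eq_mul_inv]
  refine hasSum_le (fun k => ?_) hlow hsum.hasSum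
  rw [one_div_binet_cube h]
  calc _ = (α - β) ^ 3 * (β ^ (n + k)) ^ 3 * (1 + 3 * (β ^ (n + k)) ^ 2) := by ring
    _ ≤ _ := mul_le_mul_of_nonneg_left
      (one_add_three_mul_le_inv_cube (sq_nonneg _) (by linarith [hy k])) (hpos k).le

/-- The product of the two-term truncations of the tail and of its inverse is at least one. -/
lemma one_le_truncated_product {b r : ℝ} (hb0 : 0 < b) (hb1 : b ≤ 2 / 5) (hr0 : 0 < r)
    (hr : r ≤ b ^ 2) :
    1 ≤ (1 / (1 - b ^ 3) + 3 * r ^ 2 / (1 - b ^ 5)) *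
      ((1 - b ^ 3) - 3 * r ^ 2 * (1 - b + b ^ 2 * (1 - b ^ 2) ^ 2 / (1 - b ^ 5))) := by
  have h2 : b ^ 2 ≤ 4 / 25 := by nlinarith
  have h3 : b ^ 3 ≤ 8 / 125 := by
    calc b ^ 3 ≤ (2 / 5) ^ 3 := pow_le_pow_left₀ hb0.le hb1 3
      _ = _ := by norm_num
  have h5 : b ^ 5 ≤ 1 / 50 := by
    calc b ^ 5 ≤ (2 / 5) ^ 5 := pow_le_pow_left₀ hb0.le hb1 5
      _ ≤ _ := by norm_num
  have p3 : 0 < b ^ 3 := by positivity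
  have p5 : 0 < b ^ 5 := by positivity
  obtain ⟨K, hK⟩ : ∃ K, K = (1 - b) * (1 - b ^ 5) + b ^ 2 * (1 - b ^ 2) ^ 2 := ⟨_, rfl⟩
  have hKid : (1 - b ^ 3) ^ 2 - K = b * ((1 - b) * (1 - b ^ 2) ^ 2) := by rw [hK]; ring
  have hQ : 2 / 5 ≤ (1 - b) * (1 - b ^ 2) ^ 2 := by
    have : (21 / 25 : ℝ) ^ 2 ≤ (1 - b ^ 2) ^ 2 :=
      pow_le_pow_left₀ (by norm_num) (by linarith) 2
    nlinarith
  have hK0 : 0 ≤ K := by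
    rw [hK]
    have : 0 ≤ (1 - b) * (1 - b ^ 5) := mul_nonneg (by linarith) (by linarith)
    positivity
  have hK1 : K ≤ 1 := by nlinarith
  have hr2 : r ^ 2 ≤ b * (8 / 125) := by
    calc r ^ 2 ≤ (b ^ 2) ^ 2 := pow_le_pow_left₀ hr0.le hr 2
      _ = b * b ^ 3 := by ring
      _ ≤ _ := by gcongr
  have key : 0 ≤ ((1 - b ^ 3) ^ 2 - K) * (1 - b ^ 5) - 3 * (1 - b ^ 3) * K * r ^ 2 := by
    have e1 : (1 - b ^ 3) * K ≤ 1 := by nlinarith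
    have e2 : 3 * ((1 - b ^ 3) * K) * r ^ 2 ≤ 3 * 1 * (b * (8 / 125)) := by gcongr
    have e3 : b * (2 / 5) * (49 / 50) ≤
        b * ((1 - b) * (1 - b ^ 2) ^ 2) * (1 - b ^ 5) := by
      gcongr
      linarith
    rw [hKid]
    nlinarith
  have n3 : 0 < 1 - b ^ 3 := by linarith
  have n5 : 0 < 1 - b ^ 5 := by linarith
  have hid : (1 / (1 - b ^ 3) + 3 * r ^ 2 / (1 - b ^ 5)) *
      ((1 - b ^ 3) - 3 * r ^ 2 * (1 - b + b ^ 2 * (1 - b ^ 2) ^ 2 / (1 - b ^ 5))) =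
      1 + 3 * r ^ 2 * (((1 - b ^ 3) ^ 2 - K) * (1 - b ^ 5) - 3 * (1 - b ^ 3) * K * r ^ 2) /
        ((1 - b ^ 3) * (1 - b ^ 5) ^ 2) := by
    rw [hK]
    have := n3.ne'
    have := n5.ne'
    field_simp
    ring
  rw [hid]
  have : 0 ≤ 3 * r ^ 2 * (((1 - b ^ 3) ^ 2 - K) * (1 - b ^ 5) -
      3 * (1 - b ^ 3) * K * r ^ 2) / ((1 - b ^ 3) * (1 - b ^ 5) ^ 2) := by positivity
  linarith

/-- Comparison of the claimed bound, written in `p = αⁿ` and `r = βⁿ`, with its two leading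
terms. -/
lemma leading_terms_lt {α β p r : ℝ} (h : α * β = 1) (hp : p * r = 1) (hβ0 : 0 < β)
    (hβ1 : β < 1) (hα : 1 < α) (hr0 : 0 < r) :
    p ^ 3 * ((1 - β ^ 3) - 3 * r ^ 2 * (1 - β + β ^ 2 * (1 - β ^ 2) ^ 2 / (1 - β ^ 5))) /
        (α - β) ^ 3 <
      ((p - r) / (α - β)) ^ 3 - ((p * β - α * r) / (α - β)) ^ 3 -
        3 * (p * α ^ 2) / ((α - β) * α * (α ^ 5 - 1)) +
        (3 * (α - 1) / ((α - β) ^ 3 * p) + 4 / (p * α ^ 3)) := by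
  have hD : 0 < α - β := by linarith
  have h5 : 0 < 1 - β ^ 5 := by
    linarith [pow_lt_one₀ hβ0.le hβ1 (show 5 ≠ 0 by norm_num)]
  have hα3 : 0 < α ^ 3 - 1 := by linarith [one_lt_pow₀ hα (show 3 ≠ 0 by norm_num)]
  have hp0 : 0 < p := pos_of_mul_pos_left (by rw [hp]; norm_num) hr0.le
  have hα5 : α ^ 5 - 1 = α ^ 5 * (1 - β ^ 5) := by
    have : α ^ 5 * β ^ 5 = 1 := by rw [← mul_pow, h, one_pow]
    linear_combination this
  have hid : ((p - r) / (α - β)) ^ 3 - ((p * β - α * r) / (α - β)) ^ 3 -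
        3 * (p * α ^ 2) / ((α - β) * α * (α ^ 5 - 1)) +
        (3 * (α - 1) / ((α - β) ^ 3 * p) + 4 / (p * α ^ 3)) =
      p ^ 3 * ((1 - β ^ 3) - 3 * r ^ 2 * (1 - β + β ^ 2 * (1 - β ^ 2) ^ 2 / (1 - β ^ 5))) /
        (α - β) ^ 3 + (r ^ 3 * (α ^ 3 - 1) / (α - β) ^ 3 + 4 / (p * α ^ 3)) := by
    rw [hα5]
    have hα0 : α ≠ 0 := by linarith
    have hE : α - β ≠ 0 := hD.ne'
    have h5' := h5.ne'
    have hsq : 1 - β ^ 2 = β * (α - β) := by linear_combination -h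
    have hcorr : 3 * (p * α ^ 2) / ((α - β) * α * (α ^ 5 * (1 - β ^ 5))) =
        3 * p * (β ^ 4 * (α - β) ^ 2 / (1 - β ^ 5)) / (α - β) ^ 3 := by
      have h4 : α ^ 4 * β ^ 4 = 1 := by rw [← mul_pow, h, one_pow]
      field_simp
      linear_combination -h4
    have hlast : 3 * (α - 1) / ((α - β) ^ 3 * p) = 3 * (α - 1) * r / (α - β) ^ 3 := by
      field_simp
      linear_combination (1 - α) * hp
    have hmid : β ^ 2 * (1 - β ^ 2) ^ 2 / (1 - β ^ 5) =
        β ^ 4 * (α - β) ^ 2 / (1 - β ^ 5) := by rw [hsq]; ring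
    rw [hcorr, hlast, hmid, div_pow, div_pow]
    generalize β ^ 4 * (α - β) ^ 2 / (1 - β ^ 5) = w
    generalize (α - β) ^ 3 = E
    linear_combination (1 / E) * ((3 * p ^ 2 * r * β - 3 * p * r ^ 2 * α) * h +
      (3 * r * (1 - α) + 3 * p ^ 2 * r * (1 - β) + 3 * p * w * (p * r + 1)) * hp)
  rw [hid]
  have : 0 < r ^ 3 * (α ^ 3 - 1) / (α - β) ^ 3 + 4 / (p * α ^ 3) := by positivity
  linarith

theorem stmt_5 (a : ℤ) (ha : 3 ≤ a) (α β : ℝ)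
    (hα : α = ((a : ℝ) + Real.sqrt ((a : ℝ) ^ 2 - 4)) / 2)
    (hβ : β = ((a : ℝ) - Real.sqrt ((a : ℝ) ^ 2 - 4)) / 2)
    (G : ℕ → ℝ) (hG : ∀ k : ℕ, G k = (α ^ k - β ^ k) / (α - β)) :
    ∀ n : ℕ, 2 ≤ n →
      (∑' k : ℕ, 1 / (G (n + k)) ^ 3)⁻¹ <
        G n ^ 3 - G (n - 1) ^ 3 -
          3 * α ^ (n + 2) / ((α - β) * α * (α ^ 5 - 1)) +
          (3 * (α - 1) / ((α - β) ^ 3 * α ^ n) + 4 / α ^ (n + 3)) := by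
  intro n hn
  have ha' : (3 : ℝ) ≤ a := by exact_mod_cast ha
  have hs := Real.sq_sqrt (show (0 : ℝ) ≤ (a : ℝ) ^ 2 - 4 by nlinarith)
  have hs2 : 2 ≤ Real.sqrt ((a : ℝ) ^ 2 - 4) := Real.le_sqrt_of_sq_le (by nlinarith)
  have hαβ : α * β = 1 := by rw [hα, hβ]; linear_combination -hs / 4
  have hα2 : 5 / 2 ≤ α := by rw [hα]; linarith
  have hβ0 : 0 < β := pos_of_mul_pos_right (by rw [hαβ]; norm_num) (by linarith : 0 ≤ α)
  have hβ1 : β ≤ 2 / 5 := by nlinarith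
  have hD : 0 < α - β := by linarith
  have hpr : α ^ n * β ^ n = 1 := by rw [← mul_pow, hαβ, one_pow]
  have hr0 : 0 < β ^ n := pow_pos hβ0 n
  have hr : β ^ n ≤ β ^ 2 := pow_le_pow_of_le_one hβ0.le (by linarith) hn
  have hpred : G (n - 1) = (α ^ n * β - α * β ^ n) / (α - β) := by
    obtain ⟨m, rfl⟩ : ∃ m, n = m + 1 := ⟨n - 1, by omega⟩
    rw [hG, Nat.add_sub_cancel]
    congr 1
    linear_combination (β ^ m - α ^ m) * hαβ
  have hT := le_tsum_one_div_binet_cube hαβ hβ0 hβ1 hD hn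
  have hprod := one_le_truncated_product hβ0 hβ1 hr0 hr
  have hlead := leading_terms_lt hαβ hpr hβ0 (by linarith) (by linarith) hr0
  simp only [hpred, hG, pow_add α n 2, pow_add α n 3]
  refine lt_of_le_of_lt ?_ hlead
  have h3 : 0 < 1 - β ^ 3 := by
    linarith [pow_lt_one₀ hβ0.le (by linarith : β < 1) (show 3 ≠ 0 by norm_num)]
  have h5 : 0 < 1 - β ^ 5 := by
    linarith [pow_lt_one₀ hβ0.le (by linarith : β < 1) (show 5 ≠ 0 by norm_num)]
  have hTpos : 0 < (α - β) ^ 3 *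
      ((β ^ n) ^ 3 / (1 - β ^ 3) + 3 * (β ^ n) ^ 5 / (1 - β ^ 5)) := by positivity
  refine (inv_anti₀ hTpos hT).trans ((inv_le_iff_one_le_mul₀' hTpos).2 (hprod.trans_eq ?_))
  generalize hX : (1 - β ^ 3) - 3 * (β ^ n) ^ 2 *
    (1 - β + β ^ 2 * (1 - β ^ 2) ^ 2 / (1 - β ^ 5)) = X
  have hpr3 : (α ^ n) ^ 3 * (β ^ n) ^ 3 = 1 := by rw [← mul_pow, hpr, one_pow]
  have hE := (pow_pos hD 3).ne'
  calc _ = ((α ^ n) ^ 3 * (β ^ n) ^ 3) * ((α - β) ^ 3 / (α - β) ^ 3) *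
        ((1 / (1 - β ^ 3) + 3 * (β ^ n) ^ 2 / (1 - β ^ 5)) * X) := by
        rw [hpr3, div_self hE, one_mul, one_mul]
    _ = _ := by ring
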